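/- Let Γ be an artin algebra and X a contravariantly finite resolving subcategory of Γ-mod. For any Γ-module M, if f: X → M is a minimal right X-approximation, then f is an epimorphism and its kernel Y satisfies Ext^i(X', Y) = 0 for all X' ∈ X and all i ≥ 1 (i.e., Y ∈ X^⊥). -/

import Mathlib

open CategoryTheory Limits Opposite

/-- The Ext group `Ext^n(X, Y)` in the category of `Γ`-modules. -/
noncomputable abbrev extGrp (Γ : Type) [Ring Γ] (n : ℕ) (X Y : ModuleCat Γ) : ModuleCat ℤ :=
  ((Ext ℤ (ModuleCat Γ) n).obj (op X)).obj Y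

/-- The class of finitely generated `Γ`-modules. -/
def fgMod (Γ : Type) [Ring Γ] : Set (ModuleCat Γ) := {M | Module.Finite Γ M}

/-- A resolving subcategory of the category of finitely generated `Γ`-modules:
it consists of finitely generated modules, is closed under isomorphisms, contains all
(finitely generated) projective modules, and is closed under extensions, direct summands
and kernels of epimorphisms. -/
structure IsResolving (Γ : Type) [Ring Γ] (𝒳 : Set (ModuleCat Γ)) : Prop where
  subset_fg : 𝒳 ⊆ fgMod Γ
  iso_closed : ∀ M N : ModuleCat Γ, Nonempty (M ≅ N) → M ∈ 𝒳 → N ∈ 𝒳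
  proj_mem : ∀ M : ModuleCat Γ, M ∈ fgMod Γ → Projective M → M ∈ 𝒳
  ext_closed : ∀ S : ShortComplex (ModuleCat Γ), S.ShortExact →
    S.X₁ ∈ 𝒳 → S.X₃ ∈ 𝒳 → S.X₂ ∈ 𝒳
  summand_closed : ∀ M N : ModuleCat Γ, (M ⊞ N) ∈ 𝒳 → M ∈ 𝒳
  ker_epi_closed : ∀ S : ShortComplex (ModuleCat Γ), S.ShortExact →
    S.X₂ ∈ 𝒳 → S.X₃ ∈ 𝒳 → S.X₁ ∈ 𝒳

/-- A coresolving subcategory: consists of finitely generated modules, closed under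
isomorphisms, contains all (finitely generated) injective modules, and is closed under
extensions, direct summands and cokernels of monomorphisms. -/
structure IsCoresolving (Γ : Type) [Ring Γ] (𝒴 : Set (ModuleCat Γ)) : Prop where
  subset_fg : 𝒴 ⊆ fgMod Γ
  iso_closed : ∀ M N : ModuleCat Γ, Nonempty (M ≅ N) → M ∈ 𝒴 → N ∈ 𝒴
  inj_mem : ∀ M : ModuleCat Γ, M ∈ fgMod Γ → Injective M → M ∈ 𝒴
  ext_closed : ∀ S : ShortComplex (ModuleCat Γ), S.ShortExact →
    S.X₁ ∈ 𝒴 → S.X₃ ∈ 𝒴 → S.X₂ ∈ 𝒴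
  summand_closed : ∀ M N : ModuleCat Γ, (M ⊞ N) ∈ 𝒴 → M ∈ 𝒴
  coker_mono_closed : ∀ S : ShortComplex (ModuleCat Γ), S.ShortExact →
    S.X₁ ∈ 𝒴 → S.X₂ ∈ 𝒴 → S.X₃ ∈ 𝒴

/-- The right perpendicular category `𝒳^⊥ = ∩_{i ≥ 1} ker Ext^i(𝒳, −)`
inside the finitely generated modules. -/
def rightPerp (Γ : Type) [Ring Γ] (𝒳 : Set (ModuleCat Γ)) : Set (ModuleCat Γ) :=
  {M | M ∈ fgMod Γ ∧ ∀ X ∈ 𝒳, ∀ i : ℕ, 1 ≤ i → Subsingleton (extGrp Γ i X M)}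

/-- `f : C ⟶ M` is a right `𝒞`-approximation of `M`. -/
def IsRightApprox {𝒜 : Type*} [Category 𝒜] (𝒞 : Set 𝒜) {C M : 𝒜} (f : C ⟶ M) : Prop :=
  C ∈ 𝒞 ∧ ∀ C' ∈ 𝒞, ∀ g : C' ⟶ M, ∃ h : C' ⟶ C, h ≫ f = g

/-- A morphism `f : C ⟶ M` is right minimal if every endomorphism `φ` of `C` with
`φ ≫ f = f` is an automorphism. -/
def IsRightMinimal {𝒜 : Type*} [Category 𝒜] {C M : 𝒜} (f : C ⟶ M) : Prop :=
  ∀ φ : C ⟶ C, φ ≫ f = f → IsIso φ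

/-! Let `Y` be the kernel of a minimal right `𝒳`-approximation `f : X ⟶ M`, and let
`0 ⟶ Ω ⟶ P ⟶ X' ⟶ 0` be exact with `X' ∈ 𝒳`. Pushing this sequence out along `Ω ⟶ Y ⟶ X` gives an
extension `E ∈ 𝒳` of `X'` by `X`. As `Ω ⟶ Y ⟶ X ⟶ M` vanishes, `f` extends to `E` by zero on `P`,
and this extension factors through `f`; by minimality `X ⟶ E` acquires a retraction over `M`, whose
restriction to `P` lands in `Y` and extends `Ω ⟶ Y`. With `P` projective this says that
`Ext¹(X', Y) = 0`; choosing `P` so that also `Ω ∈ 𝒳`, dimension shifting kills the higher groups.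
-/

section Approximation

variable {𝒜 : Type*} [Category 𝒜] {𝒞 : Set 𝒜} {C M : 𝒜} {f : C ⟶ M}

theorem IsRightApprox.epi_of_epi (hf : IsRightApprox 𝒞 f) {C' : 𝒜} (hC' : C' ∈ 𝒞)
    (g : C' ⟶ M) [Epi g] : Epi f := by
  obtain ⟨h, hh⟩ := hf.2 C' hC' g
  exact epi_of_epi_fac hh

theorem IsRightApprox.exists_retraction (hf : IsRightApprox 𝒞 f) (hfmin : IsRightMinimal f)
    {E : 𝒜} (hE : E ∈ 𝒞) {i : C ⟶ E} {e : E ⟶ M} (hie : i ≫ e = f) :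
    ∃ r : E ⟶ C, i ≫ r = 𝟙 C ∧ r ≫ f = e := by
  obtain ⟨h, hh⟩ := hf.2 E hE e
  have hφ : (i ≫ h) ≫ f = f := by rw [Category.assoc, hh, hie]
  have : IsIso (i ≫ h) := hfmin _ hφ
  have hφ_inv : inv (i ≫ h) ≫ f = f := by rw [IsIso.inv_comp_eq, hφ]
  refine ⟨h ≫ inv (i ≫ h), ?_, ?_⟩
  · rw [← Category.assoc, IsIso.hom_inv_id]
  · rw [Category.assoc, hφ_inv, hh]

end Approximation

section Extension

variable {𝒜 : Type*} [Category 𝒜] [Abelian 𝒜] {S : ShortComplex 𝒜}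

theorem shortExact_of_isPushout (hS : S.ShortExact) {X E : 𝒜} {g : S.X₁ ⟶ X} {j : S.X₂ ⟶ E}
    {i : X ⟶ E} (sq : IsPushout S.f g j i) :
    (ShortComplex.mk i (sq.desc S.g 0 (by simp)) (sq.inr_desc _ _ _)).ShortExact := by
  have := hS.mono_f
  have := hS.epi_g
  have mono_i : Mono i := (MorphismProperty.monomorphisms 𝒜).of_isPushout sq.flip ‹Mono S.f›
  have epi_desc : Epi (sq.desc S.g 0 (by simp)) := epi_of_epi_fac (sq.inl_desc S.g 0 (by simp))
  refine .mk' (ShortComplex.exact_of_g_is_cokernel _ ?_) mono_i epi_desc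
  refine CokernelCofork.IsColimit.ofπ' _ _ fun k hk ↦ ?_
  have hk : i ≫ k = 0 := hk
  have hjk : S.f ≫ j ≫ k = 0 := by rw [sq.w_assoc, hk, comp_zero]
  refine ⟨hS.exact.desc (j ≫ k) hjk, sq.hom_ext ?_ ?_⟩
  · rw [sq.inl_desc_assoc, hS.exact.g_desc]
  · rw [sq.inr_desc_assoc, zero_comp, hk]

theorem IsRightApprox.exists_extension_to_kernel {𝒳 : Set 𝒜}
    (hext : ∀ T : ShortComplex 𝒜, T.ShortExact → T.X₁ ∈ 𝒳 → T.X₃ ∈ 𝒳 → T.X₂ ∈ 𝒳)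
    {X M : 𝒜} {f : X ⟶ M} (hf : IsRightApprox 𝒳 f) (hfmin : IsRightMinimal f)
    (hS : S.ShortExact) (hS₃ : S.X₃ ∈ 𝒳) (g : S.X₁ ⟶ kernel f) :
    ∃ h : S.X₂ ⟶ kernel f, S.f ≫ h = g := by
  have sq := IsPushout.of_hasPushout S.f (g ≫ kernel.ι f)
  have pushout_mem : pushout S.f (g ≫ kernel.ι f) ∈ 𝒳 :=
    hext _ (shortExact_of_isPushout hS sq) hf.1 hS₃
  obtain ⟨r, inr_r, r_f⟩ :=
    hf.exists_retraction hfmin pushout_mem (sq.inr_desc 0 f (by simp))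
  have inl_r_f : (pushout.inl _ _ ≫ r) ≫ f = 0 := by
    rw [Category.assoc, r_f, sq.inl_desc]
  refine ⟨kernel.lift f _ inl_r_f, ?_⟩
  rw [← cancel_mono (kernel.ι f), Category.assoc, kernel.lift_ι, sq.w_assoc, inr_r,
    Category.comp_id]

end Extension

section ExtVanishing

universe w

variable {𝒜 : Type*} [Category 𝒜] [Abelian 𝒜]

theorem subsingleton_ext_of_surjective_precomp [HasExt.{w} 𝒜] {S : ShortComplex 𝒜}
    (hS : S.ShortExact) (Y : 𝒜) (n : ℕ) [Subsingleton (Abelian.Ext.{w} S.X₂ Y (n + 1))]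
    (hsurj : Function.Surjective
      ((Abelian.Ext.mk₀ S.f).precomp Y (zero_add n) : Abelian.Ext.{w} S.X₂ Y n →+ _)) :
    Subsingleton (Abelian.Ext.{w} S.X₃ Y (n + 1)) := by
  refine subsingleton_of_forall_eq 0 fun x ↦ ?_
  obtain ⟨y, rfl⟩ := Abelian.Ext.contravariant_sequence_exact₃ hS Y x
    (Subsingleton.elim _ _) (add_comm 1 n)
  obtain ⟨z, rfl⟩ := hsurj y
  exact hS.extClass_comp_assoc z

theorem subsingleton_ext_one_of_forall_exists_extension [HasExt.{w} 𝒜] {S : ShortComplex 𝒜}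
    (hS : S.ShortExact) (Y : 𝒜) [Subsingleton (Abelian.Ext.{w} S.X₂ Y 1)]
    (hY : ∀ g : S.X₁ ⟶ Y, ∃ h : S.X₂ ⟶ Y, S.f ≫ h = g) :
    Subsingleton (Abelian.Ext.{w} S.X₃ Y 1) := by
  refine subsingleton_ext_of_surjective_precomp hS Y 0 fun y ↦ ?_
  obtain ⟨g, rfl⟩ := (Abelian.Ext.mk₀_bijective _ _).surjective y
  obtain ⟨h, rfl⟩ := hY g
  exact ⟨Abelian.Ext.mk₀ h, Abelian.Ext.mk₀_comp_mk₀ _ _⟩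

theorem IsRightApprox.subsingleton_ext_kernel [HasExt.{w} 𝒜] {𝒳 : Set 𝒜}
    (hext : ∀ T : ShortComplex 𝒜, T.ShortExact → T.X₁ ∈ 𝒳 → T.X₃ ∈ 𝒳 → T.X₂ ∈ 𝒳)
    (hsyz : ∀ X' ∈ 𝒳, ∃ S : ShortComplex 𝒜,
      S.ShortExact ∧ S.X₁ ∈ 𝒳 ∧ Projective S.X₂ ∧ S.X₃ = X')
    {X M : 𝒜} {f : X ⟶ M} (hf : IsRightApprox 𝒳 f) (hfmin : IsRightMinimal f)
    {X' : 𝒜} (hX' : X' ∈ 𝒳) (n : ℕ) :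
    Subsingleton (Abelian.Ext.{w} X' (kernel f) (n + 1)) := by
  induction n generalizing X' with
  | zero =>
    obtain ⟨S, hS, -, _, rfl⟩ := hsyz X' hX'
    have := Abelian.Ext.subsingleton_of_projective.{w} S.X₂ (kernel f) 0
    exact subsingleton_ext_one_of_forall_exists_extension hS _
      (hf.exists_extension_to_kernel hext hfmin hS hX')
  | succ n ih =>
    obtain ⟨S, hS, hS₁, _, rfl⟩ := hsyz X' hX'
    have := Abelian.Ext.subsingleton_of_projective.{w} S.X₂ (kernel f) (n + 1)
    have := ih hS₁
    exact subsingleton_ext_of_surjective_precomp hS _ (n + 1)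
      (Function.surjective_to_subsingleton _)

theorem subsingleton_derivedFunctor_ext_succ [HasExt.{w} 𝒜] [EnoughProjectives 𝒜]
    (R : Type*) [Ring R] [Linear R 𝒜] (X Y : 𝒜) (n : ℕ)
    [Subsingleton (Abelian.Ext.{w} X Y (n + 1))] :
    Subsingleton (((Ext R 𝒜 (n + 1)).obj (op X)).obj Y) := by
  let P := projectiveResolution X
  suffices (P.complex.linearYonedaObj R Y).ExactAt (n + 1) from
    ModuleCat.subsingleton_of_isZero
      (((HomologicalComplex.exactAt_iff_isZero_homology _ _).1 this).of_iso (P.isoExt (n + 1) Y))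
  rw [HomologicalComplex.exactAt_iff' _ n (n + 1) (n + 2) (by simp) (by simp),
    ShortComplex.moduleCat_exact_iff]
  intro (x : P.complex.X (n + 1) ⟶ Y) hx
  -- The cocycle `x` represents a class in `Abelian.Ext X Y (n + 1)`, whose vanishing makes it a
  -- coboundary.
  exact (P.extMk_eq_zero_iff x (n + 2) rfl hx n rfl).1 (Subsingleton.elim _ _)

end ExtVanishing

section Modules

universe u

variable {Γ : Type} [Ring Γ]

theorem exists_fgMod_projective_epi {N : ModuleCat.{u} Γ} (hN : N ∈ fgMod Γ) :
    ∃ (P : ModuleCat.{u} Γ) (p : P ⟶ N), P ∈ fgMod Γ ∧ Projective P ∧ Epi p := by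
  have : Module.Finite Γ N := hN
  obtain ⟨n, q, hq⟩ := Module.Finite.exists_fin' Γ N
  let F := ULift.{u} (Fin n → Γ)
  let q' : F →ₗ[Γ] N := q ∘ₗ ULift.moduleEquiv.toLinearMap
  have hq' : Function.Surjective q' := hq.comp ULift.moduleEquiv.surjective
  exact ⟨ModuleCat.of Γ F, ModuleCat.ofHom q', inferInstanceAs (Module.Finite Γ F),
    (IsProjective.iff_projective F).1 inferInstance, (ModuleCat.epi_iff_surjective _).2 hq'⟩

theorem IsResolving.exists_shortExact_projective {𝒳 : Set (ModuleCat.{u} Γ)}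
    (h𝒳 : IsResolving Γ 𝒳) {X : ModuleCat.{u} Γ} (hX : X ∈ 𝒳) :
    ∃ S : ShortComplex (ModuleCat.{u} Γ),
      S.ShortExact ∧ S.X₁ ∈ 𝒳 ∧ Projective S.X₂ ∧ S.X₃ = X := by
  obtain ⟨P, p, hP, P_proj, p_epi⟩ := exists_fgMod_projective_epi (h𝒳.subset_fg hX)
  have hS : (ShortComplex.kernelSequence p).ShortExact :=
    .mk' (ShortComplex.kernelSequence_exact p) inferInstance p_epi
  exact ⟨_, hS, h𝒳.ker_epi_closed _ hS (h𝒳.proj_mem P hP P_proj) hX, P_proj, rfl⟩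

theorem wakamatsu_minimal_right_approximation_general {𝒳 : Set (ModuleCat Γ)}
    (h𝒳 : IsResolving Γ 𝒳) {M X : ModuleCat Γ} (hM : M ∈ fgMod Γ) {f : X ⟶ M}
    (hf : IsRightApprox 𝒳 f) (hfmin : IsRightMinimal f) :
    Epi f ∧ ∀ X' ∈ 𝒳, ∀ i : ℕ, 1 ≤ i → Subsingleton (extGrp Γ i X' (kernel f)) := by
  constructor
  · obtain ⟨P, p, hP, P_proj, _⟩ := exists_fgMod_projective_epi hM
    exact hf.epi_of_epi (h𝒳.proj_mem P hP P_proj) p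
  · intro X' hX' i hi
    obtain ⟨n, rfl⟩ := Nat.exists_eq_add_of_le' hi
    have := hf.subsingleton_ext_kernel h𝒳.ext_closed
      (fun _ ↦ h𝒳.exists_shortExact_projective) hfmin hX' n
    exact subsingleton_derivedFunctor_ext_succ ℤ X' (kernel f) n

end Modules

/-- Wakamatsu's lemma. Let `Γ` be an artin algebra and `𝒳` a
contravariantly finite resolving subcategory of `Γ`-mod. If `f : X ⟶ M` is a minimal right
`𝒳`-approximation of a finitely generated `Γ`-module `M`, then `f` is an epimorphism and
its kernel `Y` satisfies `Ext^i(X', Y) = 0` for all `X' ∈ 𝒳` and all `i ≥ 1`. -/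
theorem wakamatsu_minimal_right_approximation
    (R : Type) [CommRing R] [IsArtinianRing R]
    (Γ : Type) [Ring Γ] [Algebra R Γ] [Module.Finite R Γ]
    (𝒳 : Set (ModuleCat Γ)) (h𝒳 : IsResolving Γ 𝒳)
    (h𝒳cf : ∀ M : ModuleCat Γ, M ∈ fgMod Γ →
      ∃ (X : ModuleCat Γ) (f : X ⟶ M), IsRightApprox 𝒳 f)
    (M : ModuleCat Γ) (hM : M ∈ fgMod Γ)
    (X : ModuleCat Γ) (f : X ⟶ M)
    (hf : IsRightApprox 𝒳 f) (hfmin : IsRightMinimal f) :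
    Epi f ∧
    ∀ X' ∈ 𝒳, ∀ i : ℕ, 1 ≤ i →
      Subsingleton (extGrp Γ i X' (Limits.kernel f)) :=
  wakamatsu_minimal_right_approximation_general h𝒳 hM hf hfmin
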